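/- arXiv:1402.2685 — 7 statements merged into one kernel-verified Lean document; each statement's English description precedes it below -/
import Mathlib

section
/- Let n ≥ 2 and let D be a compact convex body in Euclidean space ℝⁿ satisfying the R₁,R₂ ball-sandwich condition for some reals 0 < R₂ ≤ R₁. Then there exist a point o ∈ ℝⁿ and reals r, R with 0 ≤ r ≤ R such that Metric.closedBall o r ⊆ D ⊆ Metric.closedBall o R (so the boundary ∂D lies in the spherical shell between the concentric spheres of radii r and R centered at o) and R − r ≤ (√2 − 1)·(R₁ − R₂). -/
/-!
Let `K` be the set of centres of balls of radius `R₂` contained in `D`, and let `o` and `R` be the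
centre and radius of the smallest ball enclosing `K`. If `D` lies in a ball of radius `R₁` centred
at `y`, then `K` lies in the concentric ball of radius `ρ = R₁ - R₂`, and minimality of `R` forces
`R² + |y - o|² ≤ ρ²`. Hence `|y - o| ≤ s` with `s² = ρ² - R²`. As `D` is the intersection of
the balls of radius `R₁` containing it, it contains the ball of radius `R₁ - s` about `o`; as
every boundary point is within `R₂` of `K`, it is contained in the ball of radius `R + R₂` about
`o`. The difference of the two radii is `R + s - ρ`, and `R² + s² = ρ²` gives `R + s ≤ √2 ρ`.

`D` is such an intersection because a segment from an interior point of `D` to a point outside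
crosses the boundary, and the ball supporting `D` there cannot contain the endpoint.
-/

open Metric Set Filter Topology

theorem add_sqrt_sq_sub_sq_le {a b : ℝ} (hab : a ^ 2 ≤ b ^ 2) (hb : 0 ≤ b) :
    a + √(b ^ 2 - a ^ 2) ≤ √2 * b := by
  have hs : √(b ^ 2 - a ^ 2) ^ 2 = b ^ 2 - a ^ 2 := Real.sq_sqrt (sub_nonneg.2 hab)
  calc a + √(b ^ 2 - a ^ 2) ≤ √(2 * (a ^ 2 + √(b ^ 2 - a ^ 2) ^ 2)) :=
        Real.le_sqrt_of_sq_le add_sq_le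
    _ = √2 * b := by
        rw [hs, add_sub_cancel, Real.sqrt_mul zero_le_two, Real.sqrt_sq hb]

section Frontier

theorem nontrivial_of_nonempty_frontier {X : Type*} [TopologicalSpace X] {D : Set X}
    (h : (frontier D).Nonempty) : Nontrivial X := by
  by_contra hX
  have := not_nontrivial_iff_subsingleton.1 hX
  simp at h

theorem nonempty_inter_frontier_of_isPreconnected {X : Type*} [TopologicalSpace X] {S D : Set X}
    (hS : IsPreconnected S) (hmeet : (S ∩ D).Nonempty) (hleave : (S \ D).Nonempty) :
    (S ∩ frontier D).Nonempty := by
  have := isPreconnected_iff_preconnectedSpace.1 hS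
  obtain ⟨x, hxS, hxD⟩ := hmeet
  obtain ⟨y, hyS, hyD⟩ := hleave
  obtain ⟨p, hp⟩ : (frontier (Subtype.val ⁻¹' D : Set S)).Nonempty :=
    nonempty_frontier_iff.2 ⟨⟨⟨x, hxS⟩, hxD⟩, (ne_univ_iff_exists_notMem _).2 ⟨⟨y, hyS⟩, hyD⟩⟩
  exact ⟨p, p.2, continuous_subtype_val.frontier_preimage_subset D hp⟩

theorem mem_closure_of_forall_frontier_exists_convex {V : Type*} [AddCommGroup V] [Module ℝ V]
    [TopologicalSpace V] [IsTopologicalAddGroup V] [ContinuousSMul ℝ V] {D : Set V} {x : V}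
    (hD : (interior D).Nonempty)
    (hsupp : ∀ p ∈ frontier D, ∃ K, Convex ℝ K ∧ D ⊆ K ∧ p ∉ interior K ∧ x ∈ K) :
    x ∈ closure D := by
  by_contra hx
  obtain ⟨z, hz⟩ := hD
  obtain ⟨p, hp, hpD⟩ := nonempty_inter_frontier_of_isPreconnected
    (convex_segment (𝕜 := ℝ) z x).isPreconnected
    ⟨z, left_mem_segment ℝ z x, interior_subset hz⟩
    ⟨x, right_mem_segment ℝ z x, fun h ↦ hx (subset_closure h)⟩
  have hzp : z ≠ p := fun h ↦ hpD.2 (h ▸ hz)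
  have hxp : x ≠ p := fun h ↦ hx (h ▸ hpD.1)
  obtain ⟨K, hK, hDK, hpK, hxK⟩ := hsupp p hpD
  exact hpK (hK.openSegment_interior_self_subset_interior (interior_mono hDK hz) hxK
    (mem_openSegment_of_ne_left_right hzp hxp hp))

end Frontier

section MetricSpace

variable {X : Type*} [PseudoMetricSpace X] {C D : Set X} {o x : X} {r R : ℝ}

/-- The inner parallel body of `D` at distance `r`: the centres of balls of radius `r` inside `D`,
i.e. the Minkowski difference of `D` and a ball. -/
def innerParallelBody (D : Set X) (r : ℝ) : Set X := {x | closedBall x r ⊆ D}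

theorem frontier_subset_closedBall_of_innerParallelBody_subset
    (hroll : ∀ p ∈ frontier D, ∃ x, dist x p = r ∧ closedBall x r ⊆ D)
    (ho : innerParallelBody D r ⊆ closedBall o R) : frontier D ⊆ closedBall o (R + r) := by
  intro p hp
  obtain ⟨x, hxp, hxD⟩ := hroll p hp
  have hxo : dist x o ≤ R := ho hxD
  rw [mem_closedBall]
  linarith [dist_triangle_left p o x]

/-- The Chebyshev radius of `C`: the infimum of the radii of the balls containing `C`. It is the
junk value `0` if `C` is unbounded or empty. -/
noncomputable def chebyshevRadius (C : Set X) : ℝ := sInf {r | ∃ x, C ⊆ closedBall x r}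

theorem radius_nonneg_of_subset_closedBall (hC : C.Nonempty) (hx : C ⊆ closedBall x r) : 0 ≤ r :=
  nonempty_closedBall.1 (hC.mono hx)

theorem chebyshevRadius_nonneg (hC : C.Nonempty) : 0 ≤ chebyshevRadius C := by
  refine Real.sInf_nonneg ?_
  rintro ρ ⟨x, hx⟩
  exact radius_nonneg_of_subset_closedBall hC hx

theorem chebyshevRadius_le (hC : C.Nonempty) (hx : C ⊆ closedBall x r) : chebyshevRadius C ≤ r := by
  refine csInf_le ⟨0, ?_⟩ ⟨x, hx⟩
  rintro ρ ⟨y, hy⟩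
  exact radius_nonneg_of_subset_closedBall hC hy

theorem exists_subset_closedBall_of_chebyshevRadius_lt [Nonempty X] (hC : Bornology.IsBounded C)
    (hr : chebyshevRadius C < r) : ∃ x, C ⊆ closedBall x r := by
  obtain ⟨a⟩ := ‹Nonempty X›
  obtain ⟨M, hM⟩ := hC.subset_closedBall a
  have hradii : {ρ | ∃ x, C ⊆ closedBall x ρ}.Nonempty := ⟨M, a, hM⟩
  obtain ⟨ρ, ⟨x, hx⟩, hρ⟩ := exists_lt_of_csInf_lt hradii hr
  exact ⟨x, hx.trans (closedBall_subset_closedBall hρ.le)⟩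

end MetricSpace

section NormedSpace

variable {V : Type*} [NormedAddCommGroup V] [NormedSpace ℝ V] {D : Set V} {c o x : V}
  {a b r s R : ℝ}

theorem dist_add_le_of_closedBall_subset [Nontrivial V] (ha : 0 ≤ a)
    (h : closedBall c a ⊆ closedBall x b) : dist c x + a ≤ b := by
  obtain ⟨v, hv, hray⟩ : ∃ v : V, ‖v‖ = a ∧ SameRay ℝ (c - x) v := by
    obtain hcx | hcx := eq_or_ne (c - x) 0
    · obtain ⟨v, hv⟩ := exists_norm_eq V ha
      exact ⟨v, hv, hcx ▸ SameRay.zero_left v⟩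
    · refine ⟨(a / ‖c - x‖) • (c - x), ?_, SameRay.sameRay_nonneg_smul_right _ (by positivity)⟩
      rw [norm_smul_of_nonneg (by positivity), div_mul_cancel₀ _ (norm_ne_zero_iff.2 hcx)]
  calc dist c x + a = ‖c - x + v‖ := by rw [hray.norm_add, hv, dist_eq_norm]
    _ = dist (c + v) x := by rw [dist_eq_norm, sub_add_eq_add_sub]
    _ ≤ b := h (by simp [hv])

theorem subset_closedBall_of_frontier_subset (hD : Bornology.IsBounded D) (hr : 0 ≤ r)
    (hfr : frontier D ⊆ closedBall o r) : D ⊆ closedBall o r := by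
  intro q hq
  by_contra hqr
  rw [mem_closedBall, not_le] at hqr
  obtain ⟨M, hM⟩ := hD.subset_closedBall o
  have hq_pos : 0 < dist q o := hr.trans_lt hqr
  have hqM : dist q o ≤ M := hM hq
  have h_one_le : 1 ≤ 1 + M / dist q o :=
    le_add_of_nonneg_right (div_nonneg (hq_pos.le.trans hqM) hq_pos.le)
  let ray : ℝ → V := AffineMap.lineMap o q
  have hdist {t : ℝ} (ht : 1 ≤ t) : dist (ray t) o = t * dist q o := by
    rw [dist_lineMap_left, Real.norm_of_nonneg (by linarith), dist_comm]
  have hleave : ray (1 + M / dist q o) ∉ D := fun hmem ↦ by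
    have hfar := hM hmem
    rw [mem_closedBall, hdist h_one_le, one_add_mul, div_mul_cancel₀ _ hq_pos.ne'] at hfar
    linarith
  obtain ⟨p, ⟨t, ht, rfl⟩, hp⟩ := nonempty_inter_frontier_of_isPreconnected
    (isPreconnected_Ici.image ray AffineMap.lineMap_continuous.continuousOn)
    ⟨q, ⟨1, self_mem_Ici, AffineMap.lineMap_apply_one o q⟩, hq⟩
    ⟨_, ⟨_, h_one_le, rfl⟩, hleave⟩
  have hpr := hfr hp
  rw [mem_closedBall, hdist ht] at hpr
  linarith [le_mul_of_one_le_left hq_pos.le ht]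

theorem innerParallelBody_subset_closedBall [Nontrivial V] (hr : 0 ≤ r) (hD : D ⊆ closedBall x R) :
    innerParallelBody D r ⊆ closedBall x (R - r) := fun _ hc ↦
  le_sub_iff_add_le.2 (dist_add_le_of_closedBall_subset hr (hc.trans hD))

theorem closedBall_subset_of_forall_enclosing_dist_le [Nontrivial V] (hD : IsClosed D)
    (hint : (interior D).Nonempty)
    (hsupp : ∀ p ∈ frontier D, ∃ x, dist x p = R ∧ D ⊆ closedBall x R)
    (ho : ∀ x, D ⊆ closedBall x R → dist x o ≤ s) : closedBall o (R - s) ⊆ D := by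
  intro q hq
  rw [← hD.closure_eq]
  refine mem_closure_of_forall_frontier_exists_convex hint fun p hp ↦ ?_
  obtain ⟨x, hxp, hDx⟩ := hsupp p hp
  refine ⟨closedBall x R, convex_closedBall x R, hDx, ?_, ?_⟩
  · rw [interior_closedBall', mem_ball, dist_comm, hxp]
    exact lt_irrefl R
  · rw [mem_closedBall] at hq ⊢
    linarith [dist_triangle_right q x o, ho x hDx]

end NormedSpace

section InnerProductSpace

variable {E : Type*} [NormedAddCommGroup E] [InnerProductSpace ℝ E] {C D : Set E} {o x y : E}
  {a b r t : ℝ}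

theorem dist_lineMap_sq (c x y : E) (t : ℝ) :
    dist c (AffineMap.lineMap x y t) ^ 2 =
      (1 - t) * dist c x ^ 2 + t * dist c y ^ 2 - t * (1 - t) * dist x y ^ 2 := by
  have hline : c - AffineMap.lineMap x y t = (c - x) - t • (y - x) := by
    rw [AffineMap.lineMap_apply_module']; abel
  have hcy : dist c y = ‖(c - x) - (y - x)‖ := by rw [sub_sub_sub_cancel_right, dist_eq_norm]
  rw [hcy, dist_comm x y, dist_eq_norm, dist_eq_norm c x, dist_eq_norm y x, hline,
    norm_sub_sq_real (c - x), norm_sub_sq_real (c - x), inner_smul_right, norm_smul, mul_pow,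
    Real.norm_eq_abs, sq_abs]
  ring

theorem chebyshevRadius_sq_le_of_subset_closedBall (hC : C.Nonempty) (ht₀ : 0 ≤ t) (ht₁ : t ≤ 1)
    (hx : C ⊆ closedBall x a) (hy : C ⊆ closedBall y b) :
    chebyshevRadius C ^ 2 ≤ (1 - t) * a ^ 2 + t * b ^ 2 - t * (1 - t) * dist x y ^ 2 := by
  have hdist : ∀ c ∈ C, dist c (AffineMap.lineMap x y t) ^ 2 ≤
      (1 - t) * a ^ 2 + t * b ^ 2 - t * (1 - t) * dist x y ^ 2 := fun c hc ↦ by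
    have : 0 ≤ 1 - t := sub_nonneg.2 ht₁
    rw [dist_lineMap_sq]
    gcongr
    exacts [hx hc, hy hc]
  obtain ⟨c, hc⟩ := hC
  exact Real.le_sqrt (chebyshevRadius_nonneg ⟨c, hc⟩) ((sq_nonneg _).trans (hdist c hc)) |>.1 <|
    chebyshevRadius_le ⟨c, hc⟩ fun c hc ↦ Real.le_sqrt_of_sq_le (hdist c hc)

theorem chebyshevRadius_sq_add_dist_sq_le (hC : C.Nonempty)
    (ho : C ⊆ closedBall o (chebyshevRadius C)) (hx : C ⊆ closedBall x r) :
    chebyshevRadius C ^ 2 + dist o x ^ 2 ≤ r ^ 2 := by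
  have hinterp : ∀ t ∈ Ioo (0 : ℝ) 1,
      chebyshevRadius C ^ 2 + (1 - t) * dist o x ^ 2 ≤ r ^ 2 := fun t ht ↦ by
    have := chebyshevRadius_sq_le_of_subset_closedBall hC ht.1.le ht.2.le ho hx
    refine le_of_mul_le_mul_left ?_ ht.1
    linarith
  have hlim : Tendsto (fun t : ℝ ↦ chebyshevRadius C ^ 2 + (1 - t) * dist o x ^ 2) (𝓝[>] 0)
      (𝓝 (chebyshevRadius C ^ 2 + (1 - 0) * dist o x ^ 2)) :=
    Continuous.continuousWithinAt (by fun_prop)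
  rw [sub_zero, one_mul] at hlim
  exact le_of_tendsto hlim (mem_of_superset (Ioo_mem_nhdsGT one_pos) hinterp)

theorem exists_subset_closedBall_chebyshevRadius [CompleteSpace E] (hC : Bornology.IsBounded C) :
    ∃ o, C ⊆ closedBall o (chebyshevRadius C) := by
  obtain rfl | hne := C.eq_empty_or_nonempty
  · exact ⟨0, empty_subset _⟩
  let r (n : ℕ) : ℝ := chebyshevRadius C + 1 / (n + 1)
  have hr : Tendsto r atTop (𝓝 (chebyshevRadius C)) := by
    simpa only [add_zero] using
      (tendsto_one_div_add_atTop_nhds_zero_nat (𝕜 := ℝ)).const_add (chebyshevRadius C)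
  have hr_anti : Antitone r := fun _ _ hmn ↦ add_le_add_right (Nat.one_div_le_one_div hmn) _
  choose u hu using fun n ↦ exists_subset_closedBall_of_chebyshevRadius_lt hC
    (lt_add_of_pos_right (chebyshevRadius C) (Nat.one_div_pos_of_nat (n := n)))
  have hdist : ∀ m n N, N ≤ m → N ≤ n →
      dist (u m) (u n) ≤ √(4 * (r N ^ 2 - chebyshevRadius C ^ 2)) := fun m n N hm hn ↦ by
    -- The ball centred at the midpoint of two nearly optimal centres would beat the Chebyshev
    -- radius if these were far apart.
    have := chebyshevRadius_sq_le_of_subset_closedBall (t := 1 / 2) hne (by norm_num) (by norm_num)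
      ((hu m).trans (closedBall_subset_closedBall (hr_anti hm)))
      ((hu n).trans (closedBall_subset_closedBall (hr_anti hn)))
    exact Real.le_sqrt_of_sq_le (by linarith)
  have hbound : Tendsto (fun N ↦ √(4 * (r N ^ 2 - chebyshevRadius C ^ 2))) atTop (𝓝 0) := by
    have h := (((hr.pow 2).sub_const (chebyshevRadius C ^ 2)).const_mul 4).sqrt
    rw [sub_self, mul_zero, Real.sqrt_zero] at h
    exact h
  obtain ⟨o, ho⟩ := cauchySeq_tendsto_of_complete (cauchySeq_of_le_tendsto_0 _ hdist hbound)
  exact ⟨o, fun c hc ↦ le_of_tendsto_of_tendsto' (tendsto_const_nhds.dist ho) hr fun n ↦ hu n hc⟩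

theorem width_estimate_euclidean_general [CompleteSpace E] {R₁ R₂ : ℝ} (hD : IsClosed D)
    (hfr : (frontier D).Nonempty) (hR₂ : 0 < R₂)
    (hsand : ∀ p ∈ frontier D, ∃ x₁ x₂ : E, dist x₁ p = R₁ ∧ dist x₂ p = R₂ ∧
      closedBall x₂ R₂ ⊆ D ∧ D ⊆ closedBall x₁ R₁) :
    ∃ (o : E) (r R : ℝ), 0 ≤ r ∧ r ≤ R ∧ closedBall o r ⊆ D ∧ D ⊆ closedBall o R ∧
      R - r ≤ (√2 - 1) * (R₁ - R₂) := by
  have : Nontrivial E := nontrivial_of_nonempty_frontier hfr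
  obtain ⟨y, c, -, -, hcD, hDy⟩ := hsand _ hfr.some_mem
  have hsupp : ∀ p ∈ frontier D, ∃ x, dist x p = R₁ ∧ D ⊆ closedBall x R₁ := fun p hp ↦
    let ⟨x, _, hxp, _, _, hDx⟩ := hsand p hp
    ⟨x, hxp, hDx⟩
  have hroll : ∀ p ∈ frontier D, ∃ x, dist x p = R₂ ∧ closedBall x R₂ ⊆ D := fun p hp ↦
    let ⟨_, x, _, hxp, hxD, _⟩ := hsand p hp
    ⟨x, hxp, hxD⟩
  have hint : (interior D).Nonempty :=
    ⟨c, interior_mono hcD (ball_subset_interior_closedBall (mem_ball_self hR₂))⟩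
  set K := innerParallelBody D R₂
  have hK : K.Nonempty := ⟨c, hcD⟩
  have hKball {x : E} (hx : D ⊆ closedBall x R₁) : K ⊆ closedBall x (R₁ - R₂) :=
    innerParallelBody_subset_closedBall hR₂.le hx
  obtain ⟨o, ho⟩ :=
    exists_subset_closedBall_chebyshevRadius (isBounded_closedBall.subset (hKball hDy))
  set R := chebyshevRadius K
  have hR : 0 ≤ R := chebyshevRadius_nonneg hK
  have hRρ : R ≤ R₁ - R₂ := chebyshevRadius_le hK (hKball hDy)
  set s := √((R₁ - R₂) ^ 2 - R ^ 2)
  have hs : s ≤ R₁ - R₂ := Real.sqrt_le_iff.2 ⟨hR.trans hRρ, sub_le_self _ (sq_nonneg R)⟩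
  have hinner : closedBall o (R₁ - s) ⊆ D := by
    refine closedBall_subset_of_forall_enclosing_dist_le hD hint hsupp fun x hx ↦ ?_
    rw [dist_comm]
    exact Real.le_sqrt_of_sq_le
      (le_sub_iff_add_le'.2 (chebyshevRadius_sq_add_dist_sq_le hK ho (hKball hx)))
  have houter : D ⊆ closedBall o (R + R₂) :=
    subset_closedBall_of_frontier_subset (isBounded_closedBall.subset hDy) (by positivity)
      (frontier_subset_closedBall_of_innerParallelBody_subset hroll ho)
  have hr : 0 ≤ R₁ - s := by linarith
  refine ⟨o, R₁ - s, R + R₂, hr, ?_, hinner, houter, ?_⟩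
  · simpa using dist_add_le_of_closedBall_subset hr (hinner.trans houter)
  · linarith [add_sqrt_sq_sub_sq_le (pow_le_pow_left₀ hR hRρ 2) (hR.trans hRρ)]

end InnerProductSpace

/-- Width estimate for κ₁,κ₂-convex domains in Euclidean space:
the boundary fits in a spherical shell of width at most (√2 − 1)(R₁ − R₂). -/
theorem width_estimate_euclidean
    {n : ℕ} (hn : 2 ≤ n) (D : Set (EuclideanSpace ℝ (Fin n)))
    (hDcomp : IsCompact D) (hDconv : Convex ℝ D) (hDint : (interior D).Nonempty)
    (R₁ R₂ : ℝ) (hR₂ : 0 < R₂) (hR₂₁ : R₂ ≤ R₁)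
    (hsand : ∀ p ∈ frontier D, ∃ x₁ x₂ : EuclideanSpace ℝ (Fin n),
      dist x₁ p = R₁ ∧ dist x₂ p = R₂ ∧
      Metric.closedBall x₂ R₂ ⊆ D ∧ D ⊆ Metric.closedBall x₁ R₁) :
    ∃ (o : EuclideanSpace ℝ (Fin n)) (r R : ℝ), 0 ≤ r ∧ r ≤ R ∧
      Metric.closedBall o r ⊆ D ∧ D ⊆ Metric.closedBall o R ∧
      R - r ≤ (Real.sqrt 2 - 1) * (R₁ - R₂) := by
  have : Nonempty (Fin n) := ⟨⟨0, by omega⟩⟩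
  exact width_estimate_euclidean_general hDcomp.isClosed
    (nonempty_frontier_iff.2 ⟨hDint.mono interior_subset, hDcomp.ne_univ⟩) hR₂ hsand
end

section
/- Let n ≥ 2 and let D be a compact convex body in Euclidean space ℝⁿ satisfying the R₁,R₂ ball-sandwich condition for some reals 0 < R₂ ≤ R₁. Let o ∈ ℝⁿ and r > 0 be the center and radius of a maximal inscribed ball of D, i.e. Metric.closedBall o r ⊆ D and every closed ball contained in D has radius at most r. Then D ⊆ Metric.closedBall o (Real.sqrt ((R₁ − R₂)² − (R₁ − r)²) + R₂); in particular every point of the boundary ∂D is at distance at most √((R₁ − R₂)² − (R₁ − r)²) + R₂ from o. (The hypotheses force R₂ ≤ r ≤ R₁, so the expression under the square root is nonnegative.) -/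
/-!
Let `x` be the centre of a ball of radius `s` in `D`, and let `c ∈ D` divide the segment `[o, x]` in
the ratio `t : 1 - t` with `t > 0` small. No ball about `c` of radius `ρ > r` lies in `D`, so
`∂D` has a point within distance `ρ` of `c`, and the ball of radius `R₁` that encloses `D` there has
centre `y` with `dist y c ≥ R₁ - ρ`. On the other hand `dist y o ≤ R₁ - r` and
`dist y x ≤ R₁ - s`, because this ball contains the balls about `o` and `x`. Stewart's theorem for
the cevian from `y` to `c`, with `ρ → r`, then `t → 0`, gives
`dist o x ^ 2 ≤ (R₁ - s) ^ 2 - (R₁ - r) ^ 2`. Every boundary point is at distance `R₂` from such an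
`x` with `s = R₂`, and a bounded set lies in the convex hull of its boundary.
-/

open Filter Metric Set Topology
open AffineMap (lineMap)

lemma nonempty_inter_frontier_of_isPreconnected_s3 {X : Type*} [TopologicalSpace X] {s t : Set X}
    (ht : IsPreconnected t) (hts : (t ∩ s).Nonempty) (hts' : (t \ s).Nonempty) :
    (t ∩ frontier s).Nonempty := by
  obtain ⟨x, hxt, hxs⟩ := hts
  obtain ⟨y, hyt, hys⟩ := hts'
  have := isPreconnected_iff_preconnectedSpace.1 ht
  obtain ⟨z, hz⟩ := (nonempty_frontier_iff (s := ((↑) : t → X) ⁻¹' s)).2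
    ⟨⟨⟨x, hxt⟩, hxs⟩, (ne_univ_iff_exists_notMem _).2 ⟨⟨y, hyt⟩, hys⟩⟩
  exact ⟨z, z.2, continuous_subtype_val.frontier_preimage_subset s hz⟩

section NormedSpace

variable {E : Type*} [NormedAddCommGroup E] [NormedSpace ℝ E]

lemma exists_add_smul_mem_frontier {s : Set E} (hs : Bornology.IsBounded s) {x v : E}
    (hx : x ∈ s) (hv : v ≠ 0) : ∃ t : ℝ, 0 ≤ t ∧ x + t • v ∈ frontier s := by
  obtain ⟨C, hC⟩ := hs.subset_closedBall x
  have hC₀ : 0 ≤ C := nonempty_closedBall.1 ⟨x, hC hx⟩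
  have hv₀ : 0 < ‖v‖ := norm_pos_iff.2 hv
  have hfar : x + ((C + 1) / ‖v‖) • v ∉ s := fun hmem ↦ by
    have := mem_closedBall_iff_norm.1 (hC hmem)
    rw [add_sub_cancel_left, norm_smul, Real.norm_of_nonneg (by positivity),
      div_mul_cancel₀ _ hv₀.ne'] at this
    linarith
  have hray : IsPreconnected ((fun t : ℝ ↦ x + t • v) '' Ici 0) :=
    isPreconnected_Ici.image _ (by fun_prop)
  obtain ⟨_, ⟨t, ht, rfl⟩, hfr⟩ := nonempty_inter_frontier_of_isPreconnected_s3 hray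
    ⟨x, ⟨0, self_mem_Ici, by simp⟩, hx⟩
    ⟨_, mem_image_of_mem _ (mem_Ici.2 (by positivity)), hfar⟩
  exact ⟨t, ht, hfr⟩

lemma subset_convexHull_frontier_of_isBounded [Nontrivial E] {s : Set E}
    (hs : Bornology.IsBounded s) : s ⊆ convexHull ℝ (frontier s) := by
  intro x hx
  obtain ⟨v, hv⟩ := exists_ne (0 : E)
  obtain ⟨a, ha, hxa⟩ := exists_add_smul_mem_frontier hs hx hv
  obtain ⟨b, hb, hxb⟩ := exists_add_smul_mem_frontier hs hx (neg_ne_zero.2 hv)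
  refine segment_subset_convexHull hxa hxb (mem_segment_iff_sameRay.2 ?_)
  rw [sub_add_cancel_left, add_sub_cancel_left, ← smul_neg]
  exact (SameRay.refl (-v)).nonneg_smul_left ha |>.nonneg_smul_right hb

lemma dist_add_le_of_closedBall_subset_closedBall [Nontrivial E] {a b : E} {s R : ℝ} (hs : 0 ≤ s)
    (h : closedBall a s ⊆ closedBall b R) : dist b a + s ≤ R := by
  obtain ⟨e, he, hray⟩ : ∃ e : E, ‖e‖ = s ∧ SameRay ℝ (a - b) e := by
    rcases eq_or_ne (a - b) 0 with hab | hab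
    · obtain ⟨e, he⟩ := exists_norm_eq E hs
      exact ⟨e, he, hab ▸ .zero_left e⟩
    · have hpos : 0 < ‖a - b‖ := norm_pos_iff.2 hab
      refine ⟨(s / ‖a - b‖) • (a - b), ?_, .sameRay_nonneg_smul_right _ (by positivity)⟩
      rw [norm_smul, Real.norm_of_nonneg (by positivity), div_mul_cancel₀ _ hpos.ne']
  calc dist b a + s = ‖a - b + e‖ := by rw [hray.norm_add, he, dist_comm, dist_eq_norm]
    _ = dist (a + e) b := by rw [dist_eq_norm, sub_add_eq_add_sub]
    _ ≤ R := h (by simp [he])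

end NormedSpace

lemma dist_sq_lineMap {V P : Type*} [NormedAddCommGroup V] [InnerProductSpace ℝ V] [MetricSpace P]
    [NormedAddTorsor V P] (y a b : P) (t : ℝ) :
    dist y (lineMap a b t) ^ 2 =
      (1 - t) * dist y a ^ 2 + t * dist y b ^ 2 - t * (1 - t) * dist a b ^ 2 := by
  have hc : lineMap a b t -ᵥ y = (1 - t) • (a -ᵥ y) + t • (b -ᵥ y) := by
    rw [← AffineMap.lineMap_apply_module, AffineMap.lineMap_vsub]
  have hab : a -ᵥ b = (a -ᵥ y) - (b -ᵥ y) := (vsub_sub_vsub_cancel_right a b y).symm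
  rw [dist_comm y, dist_comm y, dist_comm y]
  simp only [dist_eq_norm_vsub V]
  rw [hc, hab, norm_add_sq_real, norm_sub_sq_real, real_inner_smul_left, real_inner_smul_right,
    norm_smul, norm_smul, mul_pow, mul_pow, Real.norm_eq_abs, Real.norm_eq_abs, sq_abs, sq_abs]
  ring

section Balls

variable {α : Type*} [PseudoMetricSpace α]

/-- The outer half of the ball-sandwich condition (for `D` convex, `R⁻¹`-convexity): each boundary
point of `D` lies on a sphere of radius `R` whose closed ball encloses `D`. -/
def HasOuterBalls (R : ℝ) (D : Set α) : Prop :=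
  ∀ p ∈ frontier D, ∃ x, dist x p = R ∧ D ⊆ closedBall x R

/-- The inner half of the ball-sandwich condition (a ball of radius `R` rolls freely in `D`): each
boundary point of `D` lies on a sphere of radius `R` whose closed ball is contained in `D`. -/
def HasInnerBalls (R : ℝ) (D : Set α) : Prop :=
  ∀ p ∈ frontier D, ∃ x, dist x p = R ∧ closedBall x R ⊆ D

/-- The closed ball with centre `o` and radius `r` is an inscribed ball of `D` of maximal radius.
Maximality compares radii, not balls with respect to inclusion. -/
structure IsMaximalInscribedBall (D : Set α) (o : α) (r : ℝ) : Prop where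
  subset : closedBall o r ⊆ D
  radius_le : ∀ (o' : α) (r' : ℝ), closedBall o' r' ⊆ D → r' ≤ r

lemma IsMaximalInscribedBall.ne_univ {D : Set α} {o : α} {r : ℝ}
    (h : IsMaximalInscribedBall D o r) : D ≠ univ := by
  rintro rfl
  exact (lt_add_one r).not_ge (h.radius_le o (r + 1) (subset_univ _))

lemma IsMaximalInscribedBall.nontrivial {D : Set α} {o : α} {r : ℝ}
    (h : IsMaximalInscribedBall D o r) (hr : 0 ≤ r) : Nontrivial α := by
  obtain ⟨z, hz⟩ := (ne_univ_iff_exists_notMem D).1 h.ne_univ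
  exact nontrivial_of_ne o z (ne_of_mem_of_not_mem (h.subset (mem_closedBall_self hr)) hz)

end Balls

lemma HasOuterBalls.exists_subset_closedBall_sub_le_dist {E : Type*}
    [SeminormedAddCommGroup E] [NormedSpace ℝ E] {D : Set E} {R s : ℝ} {c : E}
    (hD : HasOuterBalls R D) (hc : c ∈ D) (hs : ¬ closedBall c s ⊆ D) :
    ∃ y, D ⊆ closedBall y R ∧ R - s ≤ dist y c := by
  have hs' : (closedBall c s \ D).Nonempty := sdiff_nonempty.2 hs
  have hs₀ : 0 ≤ s := nonempty_closedBall.1 (hs'.mono sdiff_subset)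
  obtain ⟨p, hpc, hp⟩ := nonempty_inter_frontier_of_isPreconnected_s3
    (convex_closedBall c s).isPreconnected ⟨c, mem_closedBall_self hs₀, hc⟩ hs'
  obtain ⟨y, hyp, hDy⟩ := hD p hp
  refine ⟨y, hDy, ?_⟩
  have := dist_triangle_right y p c
  rw [mem_closedBall] at hpc
  linarith

section InnerProductSpace

variable {E : Type*} [NormedAddCommGroup E] [InnerProductSpace ℝ E]
  {D : Set E} {R s r t : ℝ} {o x : E}

lemma IsMaximalInscribedBall.sq_sub_le_of_lineMap_mem (h : IsMaximalInscribedBall D o r)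
    (hr : 0 ≤ r) (hD : HasOuterBalls R D) (hs : 0 ≤ s) (hx : closedBall x s ⊆ D)
    (ht : t ∈ Icc 0 1) (hc : lineMap o x t ∈ D) :
    (R - r) ^ 2 ≤ (1 - t) * (R - r) ^ 2 + t * (R - s) ^ 2 - t * (1 - t) * dist o x ^ 2 := by
  set M := (1 - t) * (R - r) ^ 2 + t * (R - s) ^ 2 - t * (1 - t) * dist o x ^ 2
  have := h.nontrivial hr
  have hcenter : ∀ ρ, r < ρ → ∃ y, D ⊆ closedBall y R ∧ R - ρ ≤ dist y (lineMap o x t) :=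
    fun ρ hρ ↦ hD.exists_subset_closedBall_sub_le_dist hc fun hsub ↦
      hρ.not_ge (h.radius_le _ _ hsub)
  have hstewart : ∀ y, D ⊆ closedBall y R → dist y (lineMap o x t) ^ 2 ≤ M := fun y hy ↦ by
    have hyo : dist y o ≤ R - r := le_sub_iff_add_le.2 <|
      dist_add_le_of_closedBall_subset_closedBall hr (h.subset.trans hy)
    have hyx : dist y x ≤ R - s := le_sub_iff_add_le.2 <|
      dist_add_le_of_closedBall_subset_closedBall hs (hx.trans hy)
    have ht₁ : 0 ≤ 1 - t := sub_nonneg.2 ht.2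
    have ht₀ : 0 ≤ t := ht.1
    rw [dist_sq_lineMap]
    unfold M
    gcongr
  obtain ⟨y, hy, -⟩ := hcenter (r + 1) (lt_add_one r)
  have hM : 0 ≤ M := (sq_nonneg _).trans (hstewart y hy)
  have hrR : 0 ≤ R - r := by
    have := dist_add_le_of_closedBall_subset_closedBall hr (h.subset.trans hy)
    linarith [dist_nonneg (x := y) (y := o)]
  refine (Real.le_sqrt hrR hM).1 (le_of_forall_pos_le_add fun ε hε ↦ ?_)
  obtain ⟨y, hy, hle⟩ := hcenter (r + ε) (lt_add_of_pos_right r hε)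
  linarith [Real.le_sqrt_of_sq_le (hstewart y hy)]

lemma IsMaximalInscribedBall.dist_sq_le (h : IsMaximalInscribedBall D o r) (hr : 0 < r)
    (hD : HasOuterBalls R D) (hs : 0 ≤ s) (hx : closedBall x s ⊆ D) :
    dist o x ^ 2 ≤ (R - s) ^ 2 - (R - r) ^ 2 := by
  have hlim : Tendsto (fun t : ℝ ↦ (1 - t) * dist o x ^ 2) (𝓝[>] 0) (𝓝 (dist o x ^ 2)) :=
    tendsto_nhdsWithin_of_tendsto_nhds (Continuous.tendsto' (by fun_prop) _ _ (by simp))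
  have hmem : ∀ᶠ t in 𝓝[>] (0 : ℝ), lineMap o x t ∈ D := by
    have hcont : Tendsto (lineMap o x : ℝ → E) (𝓝[>] 0) (𝓝 o) :=
      tendsto_nhdsWithin_of_tendsto_nhds
        (AffineMap.lineMap_continuous.tendsto' _ _ (AffineMap.lineMap_apply_zero o x))
    exact (hcont.eventually (closedBall_mem_nhds o hr)).mono fun t ht ↦ h.subset ht
  refine le_of_tendsto hlim ?_
  filter_upwards [hmem, Ioo_mem_nhdsGT one_pos] with t hc ht
  have := h.sq_sub_le_of_lineMap_mem hr.le hD hs hx (Ioo_subset_Icc_self ht) hc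
  refine le_of_mul_le_mul_left ?_ ht.1
  linarith

theorem circumradius_estimate_euclidean_general {R₁ R₂ : ℝ}
    (hout : HasOuterBalls R₁ D) (hinn : HasInnerBalls R₂ D) (hr : 0 < r)
    (h : IsMaximalInscribedBall D o r) :
    D ⊆ closedBall o (√((R₁ - R₂) ^ 2 - (R₁ - r) ^ 2) + R₂) := by
  have := h.nontrivial hr.le
  have ho : o ∈ D := h.subset (mem_closedBall_self hr.le)
  have hbdd : Bornology.IsBounded D := by
    obtain ⟨p, hp⟩ := nonempty_frontier_iff.2 ⟨⟨o, ho⟩, h.ne_univ⟩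
    obtain ⟨y, -, hDy⟩ := hout p hp
    exact isBounded_closedBall.subset hDy
  refine (subset_convexHull_frontier_of_isBounded hbdd).trans
    (convexHull_min (fun p hp ↦ ?_) (convex_closedBall _ _))
  obtain ⟨x, hxp, hx⟩ := hinn p hp
  calc dist p o ≤ dist o x + dist x p := by rw [dist_comm p]; exact dist_triangle o x p
    _ ≤ √((R₁ - R₂) ^ 2 - (R₁ - r) ^ 2) + R₂ :=
      add_le_add (Real.le_sqrt_of_sq_le (h.dist_sq_le hr hout (hxp ▸ dist_nonneg) hx)) hxp.le

end InnerProductSpace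

/-- Bound on the circumscribed radius centered at the center of a maximal inscribed ball
of a κ₁,κ₂-convex Euclidean domain. -/
theorem circumradius_estimate_euclidean
    {n : ℕ} (hn : 2 ≤ n) (D : Set (EuclideanSpace ℝ (Fin n)))
    (hDcomp : IsCompact D) (hDconv : Convex ℝ D) (hDint : (interior D).Nonempty)
    (R₁ R₂ : ℝ) (hR₂ : 0 < R₂) (hR₂₁ : R₂ ≤ R₁)
    (hsand : ∀ p ∈ frontier D, ∃ x₁ x₂ : EuclideanSpace ℝ (Fin n),
      dist x₁ p = R₁ ∧ dist x₂ p = R₂ ∧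
      Metric.closedBall x₂ R₂ ⊆ D ∧ D ⊆ Metric.closedBall x₁ R₁)
    (o : EuclideanSpace ℝ (Fin n)) (r : ℝ) (hr : 0 < r)
    (hins : Metric.closedBall o r ⊆ D)
    (hmax : ∀ (o' : EuclideanSpace ℝ (Fin n)) (r' : ℝ),
      Metric.closedBall o' r' ⊆ D → r' ≤ r) :
    D ⊆ Metric.closedBall o (Real.sqrt ((R₁ - R₂) ^ 2 - (R₁ - r) ^ 2) + R₂) :=
  circumradius_estimate_euclidean_general
    (fun p hp ↦ let ⟨x₁, _, h₁, _, _, hD⟩ := hsand p hp; ⟨x₁, h₁, hD⟩)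
    (fun p hp ↦ let ⟨_, x₂, _, h₂, hD, _⟩ := hsand p hp; ⟨x₂, h₂, hD⟩) hr ⟨hins, hmax⟩
end

section
/- For all real numbers R₁, R₂, r with 0 < R₂ ≤ r ≤ R₁, we have (Real.sqrt ((R₁ − R₂)² − (R₁ − r)²) + R₂) / r ≤ (R₁ + Real.sqrt (2·R₁·R₂)) / (R₂ + Real.sqrt (2·R₁·R₂)). -/
/-!
Consider the circle of radius `R₁ - R₂` around `(R₁, 0)`: above `r`, its upper half has height
`y = √((R₁ - R₂)² - (R₁ - r)²)`, so `(y + R₂) / r` is the slope of the line from `(0, -R₂)` to the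
point `(r, y)`. It is maximal for the tangent to the circle. With `s = √(2 R₁ R₂)`, the length of
the tangent segment, the slope of the tangent is `(R₁ + s) / (R₂ + s)`; it is rational in `R₁`,
`R₂` and `s` because `(R₂ + s, R₁ + s, R₂ + R₁ + s)` is a Pythagorean triple.
-/

theorem mul_add_mul_le_sqrt_mul_sqrt (a b x y : ℝ) :
    a * x + b * y ≤ √(a ^ 2 + b ^ 2) * √(x ^ 2 + y ^ 2) := by
  simpa only [Fin.sum_univ_two, Matrix.cons_val_zero, Matrix.cons_val_one] using
    Real.sum_mul_le_sqrt_mul_sqrt Finset.univ ![a, b] ![x, y]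

theorem mul_sqrt_sq_sub_sq_add_mul_le {x ρ : ℝ} (hx : |x| ≤ |ρ|) (a b : ℝ) :
    a * √(ρ ^ 2 - x ^ 2) + b * x ≤ √(a ^ 2 + b ^ 2) * |ρ| := by
  have on_circle : √(ρ ^ 2 - x ^ 2) ^ 2 + x ^ 2 = ρ ^ 2 := by
    rw [Real.sq_sqrt (sub_nonneg.mpr (sq_le_sq.mpr hx)), sub_add_cancel]
  have cauchy_schwarz := mul_add_mul_le_sqrt_mul_sqrt a b √(ρ ^ 2 - x ^ 2) x
  rwa [on_circle, Real.sqrt_sq_eq_abs] at cauchy_schwarz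

theorem sqrt_sq_add_sq_of_sq_eq_two_mul {a b s : ℝ} (hs : s ^ 2 = 2 * a * b)
    (hsum : 0 ≤ a + b + s) : √((a + s) ^ 2 + (b + s) ^ 2) = a + b + s := by
  have pythagorean : (a + s) ^ 2 + (b + s) ^ 2 = (a + b + s) ^ 2 := by
    linear_combination hs
  rw [pythagorean, Real.sqrt_sq hsum]

theorem spindle_quotient_euclidean_general (R₁ R₂ r : ℝ)
    (hR₂ : 0 < R₂) (hr₂ : R₂ ≤ r) (hr₁ : r ≤ 2 * R₁ - R₂) :
    (√((R₁ - R₂) ^ 2 - (R₁ - r) ^ 2) + R₂) / r ≤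
      (R₁ + √(2 * R₁ * R₂)) / (R₂ + √(2 * R₁ * R₂)) := by
  have hR : 0 ≤ R₁ - R₂ := by linarith
  have hR₁ : 0 < R₁ := by linarith
  have hr : |R₁ - r| ≤ |R₁ - R₂| := by
    rw [abs_of_nonneg hR, abs_le]
    constructor <;> linarith
  set s := √(2 * R₁ * R₂)
  have hs : s ^ 2 = 2 * R₂ * R₁ := by
    rw [Real.sq_sqrt (by positivity), mul_right_comm]
  have below_tangent : (R₂ + s) * √((R₁ - R₂) ^ 2 - (R₁ - r) ^ 2) + (R₁ + s) * (R₁ - r) ≤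
      (R₂ + R₁ + s) * (R₁ - R₂) := by
    simpa only [sqrt_sq_add_sq_of_sq_eq_two_mul hs (by positivity), abs_of_nonneg hR]
      using mul_sqrt_sq_sub_sq_add_mul_le hr (R₂ + s) (R₁ + s)
  rw [div_le_div_iff₀ (hR₂.trans_le hr₂) (by positivity)]
  linarith

/-- Euclidean quotient estimate for rounded spindle-shaped hypersurfaces:
for inscribed radius r ∈ [R₂, R₁], the ratio of circumscribed to inscribed radius
is at most (R₁ + √(2R₁R₂))/(R₂ + √(2R₁R₂)). -/
theorem spindle_quotient_euclidean (R₁ R₂ r : ℝ)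
    (hR₂ : 0 < R₂) (hr₂ : R₂ ≤ r) (hr₁ : r ≤ R₁) :
    (Real.sqrt ((R₁ - R₂) ^ 2 - (R₁ - r) ^ 2) + R₂) / r ≤
      (R₁ + Real.sqrt (2 * R₁ * R₂)) / (R₂ + Real.sqrt (2 * R₁ * R₂)) :=
  spindle_quotient_euclidean_general R₁ R₂ r hR₂ hr₂ (by linarith)
end

section
/- For all real numbers R₁, R₂ with 0 < R₂ ≤ R₁, setting r₀ = (2·R₁²·R₂ − R₂·(R₁ − R₂)·Real.sqrt (2·R₁·R₂)) / (R₁² + R₂²), we have R₂ ≤ r₀ ≤ R₁ and (Real.sqrt ((R₁ − R₂)² − (R₁ − r₀)²) + R₂) / r₀ = (R₁ + Real.sqrt (2·R₁·R₂)) / (R₂ + Real.sqrt (2·R₁·R₂)). In other words, the Euclidean quotient bound is attained (the estimate is sharp). -/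
/-!
Write `s = √(2 R₁ R₂)`. As `r` varies, the pair (inscribed radius, circumscribed radius) runs over
an arc of the circle with centre `(R₁, R₂)` and radius `R₁ - R₂`, so their quotient is largest
where a line through the origin touches that circle. The tangent segment has length
`√(R₁² + R₂² - (R₁ - R₂)²) = s`, and since `(R₁ + s, R₂ + s, R₁ + R₂ + s)` is a Pythagorean triple,
the point of contact is `s / (R₁ + R₂ + s) • (R₂ + s, R₁ + s)`.
-/

section Tangent

theorem add_sq_add_add_sq_of_sq_eq_two_mul {R : Type*} [CommRing R] {a b s : R}
    (hs : s ^ 2 = 2 * a * b) : (a + s) ^ 2 + (b + s) ^ 2 = (a + b + s) ^ 2 := by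
  linear_combination hs

variable {K : Type*} [Field K] {a b s : K}

/-- For `s ^ 2 = 2 * a * b`, the abscissa of the point where a tangent from the origin, of length
`s`, touches the circle with centre `(a, b)` and radius `a - b`. Exchanging `a` and `b` gives the
ordinate. -/
def tangentAbscissa (a b s : K) : K :=
  s * (b + s) / (a + b + s)

theorem tangentAbscissa_eq_div (hs : s ^ 2 = 2 * a * b) (hab : a ^ 2 + b ^ 2 ≠ 0) :
    tangentAbscissa a b s = (2 * a ^ 2 * b - b * (a - b) * s) / (a ^ 2 + b ^ 2) := by
  have denominator_eq : (a + b + s) * (a + b - s) = a ^ 2 + b ^ 2 := by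
    linear_combination -hs
  have numerator_eq : s * (b + s) * (a + b - s) = 2 * a ^ 2 * b - b * (a - b) * s := by
    linear_combination (a - s) * hs
  have conj_ne_zero : a + b - s ≠ 0 := right_ne_zero_of_mul (denominator_eq ▸ hab)
  rw [tangentAbscissa, ← denominator_eq, ← numerator_eq, mul_div_mul_right _ _ conj_ne_zero]

theorem sub_tangentAbscissa (hs : s ^ 2 = 2 * a * b) (h : a + b + s ≠ 0) :
    a - tangentAbscissa a b s = (a - b) * (a + s) / (a + b + s) := by
  rw [tangentAbscissa, sub_div' h]
  congr 1
  linear_combination -hs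

theorem tangentAbscissa_sub (hs : s ^ 2 = 2 * a * b) (h : a + b + s ≠ 0) :
    tangentAbscissa a b s - b = b * (a - b) / (a + b + s) := by
  rw [tangentAbscissa, div_sub' h]
  congr 1
  linear_combination hs

theorem tangentAbscissa_swap_div (hs : s ≠ 0) (h : a + b + s ≠ 0) :
    tangentAbscissa b a s / tangentAbscissa a b s = (a + s) / (b + s) := by
  rw [tangentAbscissa, tangentAbscissa, add_comm b a, div_div_div_cancel_right₀ h,
    mul_div_mul_left _ _ hs]

end Tangent

theorem sqrt_sq_sub_sq_mul_div {x y h d : ℝ} (hxy : x ^ 2 + y ^ 2 = h ^ 2) (hh : h ≠ 0)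
    (hd : 0 ≤ d * y / h) : √(d ^ 2 - (d * x / h) ^ 2) = d * y / h := by
  rw [← Real.sqrt_sq hd]
  congr 1
  field_simp
  linear_combination -d ^ 2 * hxy

/-- The circumscribed radius of the rounded spindle-shaped hypersurface with parameters
`R₂ ≤ R₁` and inscribed radius `r`. -/
noncomputable def spindleCircumradius (R₁ R₂ r : ℝ) : ℝ :=
  √((R₁ - R₂) ^ 2 - (R₁ - r) ^ 2) + R₂

/-- The inscribed radius `r₀` at which the rounded spindle-shaped hypersurface with parameters
`R₂ ≤ R₁` has the largest quotient of circumscribed by inscribed radius. -/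
noncomputable def spindleExtremalInradius (R₁ R₂ : ℝ) : ℝ :=
  (2 * R₁ ^ 2 * R₂ - R₂ * (R₁ - R₂) * √(2 * R₁ * R₂)) / (R₁ ^ 2 + R₂ ^ 2)

section Spindle

variable {R₁ R₂ : ℝ}

theorem spindleExtremalInradius_eq_tangentAbscissa (hR₁ : 0 < R₁) (hR₂ : 0 < R₂) :
    spindleExtremalInradius R₁ R₂ = tangentAbscissa R₁ R₂ √(2 * R₁ * R₂) :=
  (tangentAbscissa_eq_div (Real.sq_sqrt (by positivity)) (by positivity)).symm

theorem le_spindleExtremalInradius (hR₂ : 0 < R₂) (h : R₂ ≤ R₁) :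
    R₂ ≤ spindleExtremalInradius R₁ R₂ := by
  have hR₁ : 0 < R₁ := hR₂.trans_le h
  have : 0 ≤ R₁ - R₂ := sub_nonneg.mpr h
  rw [spindleExtremalInradius_eq_tangentAbscissa hR₁ hR₂, ← sub_nonneg,
    tangentAbscissa_sub (Real.sq_sqrt (by positivity)) (by positivity)]
  positivity

theorem spindleExtremalInradius_le (hR₂ : 0 < R₂) (h : R₂ ≤ R₁) :
    spindleExtremalInradius R₁ R₂ ≤ R₁ := by
  have hR₁ : 0 < R₁ := hR₂.trans_le h
  have : 0 ≤ R₁ - R₂ := sub_nonneg.mpr h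
  rw [spindleExtremalInradius_eq_tangentAbscissa hR₁ hR₂, ← sub_nonneg,
    sub_tangentAbscissa (Real.sq_sqrt (by positivity)) (by positivity)]
  positivity

theorem spindleCircumradius_spindleExtremalInradius (hR₂ : 0 < R₂) (h : R₂ ≤ R₁) :
    spindleCircumradius R₁ R₂ (spindleExtremalInradius R₁ R₂) =
      tangentAbscissa R₂ R₁ √(2 * R₁ * R₂) := by
  have hR₁ : 0 < R₁ := hR₂.trans_le h
  have : 0 ≤ R₁ - R₂ := sub_nonneg.mpr h
  have hs : √(2 * R₁ * R₂) ^ 2 = 2 * R₁ * R₂ := Real.sq_sqrt (by positivity)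
  rw [spindleCircumradius, spindleExtremalInradius_eq_tangentAbscissa hR₁ hR₂]
  set s := √(2 * R₁ * R₂)
  have hsum : R₁ + R₂ + s ≠ 0 := by positivity
  have sub_ordinate : R₂ - tangentAbscissa R₂ R₁ s = (R₂ - R₁) * (R₂ + s) / (R₂ + R₁ + s) :=
    sub_tangentAbscissa (hs.trans (mul_right_comm 2 R₁ R₂)) (by positivity)
  rw [sub_tangentAbscissa hs hsum,
    sqrt_sq_sub_sq_mul_div (add_sq_add_add_sq_of_sq_eq_two_mul hs) hsum (by positivity)]
  linear_combination sub_ordinate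

theorem spindleCircumradius_div_spindleExtremalInradius (hR₂ : 0 < R₂) (h : R₂ ≤ R₁) :
    spindleCircumradius R₁ R₂ (spindleExtremalInradius R₁ R₂) / spindleExtremalInradius R₁ R₂ =
      (R₁ + √(2 * R₁ * R₂)) / (R₂ + √(2 * R₁ * R₂)) := by
  have hR₁ : 0 < R₁ := hR₂.trans_le h
  rw [spindleCircumradius_spindleExtremalInradius hR₂ h,
    spindleExtremalInradius_eq_tangentAbscissa hR₁ hR₂,
    tangentAbscissa_swap_div (by positivity) (by positivity)]

end Spindle

/-- Sharpness of the Euclidean quotient estimate: the bound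
(R₁ + √(2R₁R₂))/(R₂ + √(2R₁R₂)) is attained at
r₀ = (2R₁²R₂ − R₂(R₁ − R₂)√(2R₁R₂))/(R₁² + R₂²). -/
theorem spindle_quotient_euclidean_sharp (R₁ R₂ : ℝ)
    (hR₂ : 0 < R₂) (hR₂₁ : R₂ ≤ R₁) :
    R₂ ≤ (2 * R₁ ^ 2 * R₂ - R₂ * (R₁ - R₂) * Real.sqrt (2 * R₁ * R₂)) / (R₁ ^ 2 + R₂ ^ 2) ∧
    (2 * R₁ ^ 2 * R₂ - R₂ * (R₁ - R₂) * Real.sqrt (2 * R₁ * R₂)) / (R₁ ^ 2 + R₂ ^ 2) ≤ R₁ ∧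
    (Real.sqrt ((R₁ - R₂) ^ 2 -
        (R₁ - (2 * R₁ ^ 2 * R₂ - R₂ * (R₁ - R₂) * Real.sqrt (2 * R₁ * R₂)) /
          (R₁ ^ 2 + R₂ ^ 2)) ^ 2) + R₂) /
      ((2 * R₁ ^ 2 * R₂ - R₂ * (R₁ - R₂) * Real.sqrt (2 * R₁ * R₂)) / (R₁ ^ 2 + R₂ ^ 2)) =
    (R₁ + Real.sqrt (2 * R₁ * R₂)) / (R₂ + Real.sqrt (2 * R₁ * R₂)) :=
  ⟨le_spindleExtremalInradius hR₂ hR₂₁, spindleExtremalInradius_le hR₂ hR₂₁,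
    spindleCircumradius_div_spindleExtremalInradius hR₂ hR₂₁⟩
end

section
/- For all real numbers R₁, R₂, r with 0 ≤ R₂ ≤ r ≤ R₁ < π/2, we have Real.arccos (Real.cos (R₁ − R₂) / Real.cos (R₁ − r)) + R₂ − r ≤ 2 · Real.arccos (Real.sqrt (Real.cos (R₁ − R₂))) − (R₁ − R₂). -/
/-!
Put `D = R₁ - R₂` and `x = R₁ - r`. The angle `a = arccos (cos D / cos x)` is the second leg of the
right spherical triangle with leg `x` and hypotenuse `D`, since spherical Pythagoras reads
`cos a * cos x = cos D`. The width is `a + x - D`, and among right triangles with hypotenuse `D`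
the sum of the legs is largest when they are equal, that is, when `cos a = cos x = √(cos D)`.
-/

open Real

theorem cos_mul_cos_le_cos_add_div_two_sq (x y : ℝ) : cos x * cos y ≤ cos ((x + y) / 2) ^ 2 :=
  calc cos x * cos y = (cos (x + y) + cos (x - y)) / 2 := by rw [cos_add, cos_sub]; ring
    _ ≤ (cos (x + y) + 1) / 2 := by gcongr; exact cos_le_one _
    _ = cos ((x + y) / 2) ^ 2 := by rw [cos_sq, mul_div_cancel₀ _ two_ne_zero]; ring

theorem add_le_two_mul_arccos_sqrt_cos_mul_cos {x y : ℝ} (h : x + y ≤ π) :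
    x + y ≤ 2 * arccos √(cos x * cos y) := by
  rcases le_total (x + y) 0 with hneg | hnonneg
  · exact hneg.trans (mul_nonneg zero_le_two (arccos_nonneg _))
  · have hcos : 0 ≤ cos ((x + y) / 2) := cos_nonneg_of_mem_Icc ⟨by linarith, by linarith⟩
    have hsqrt : √(cos x * cos y) ≤ cos ((x + y) / 2) :=
      sqrt_le_iff.2 ⟨hcos, cos_mul_cos_le_cos_add_div_two_sq x y⟩
    have harccos : (x + y) / 2 ≤ arccos √(cos x * cos y) := by
      simpa only [arccos_cos (x := (x + y) / 2) (by linarith) (by linarith)]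
        using arccos_le_arccos hsqrt
    linarith

theorem arccos_div_cos_add_le {c x : ℝ} (hc : 0 ≤ c) (hcos : 0 < cos x) (hcx : c ≤ cos x)
    (hx : x ≤ π / 2) : arccos (c / cos x) + x ≤ 2 * arccos √c := by
  have hdiv : 0 ≤ c / cos x := div_nonneg hc hcos.le
  have hpythagoras : cos (arccos (c / cos x)) * cos x = c := by
    rw [cos_arccos (by linarith) (div_le_one_of_le₀ hcx hcos.le), div_mul_cancel₀ _ hcos.ne']
  have hsum : arccos (c / cos x) + x ≤ π := by linarith [arccos_le_pi_div_two.2 hdiv]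
  simpa only [hpythagoras] using add_le_two_mul_arccos_sqrt_cos_mul_cos hsum

theorem spindle_width_spherical_general {R₁ R₂ r : ℝ} (hr : |R₁ - r| ≤ R₁ - R₂)
    (hR : R₁ - R₂ < π / 2) :
    arccos (cos (R₁ - R₂) / cos (R₁ - r)) + R₂ - r ≤
      2 * arccos √(cos (R₁ - R₂)) - (R₁ - R₂) := by
  have hcosR : 0 < cos (R₁ - R₂) :=
    cos_pos_of_mem_Ioo ⟨by linarith [abs_nonneg (R₁ - r), pi_pos], hR⟩
  have hcos_le : cos (R₁ - R₂) ≤ cos (R₁ - r) := by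
    simpa only [cos_abs] using
      cos_le_cos_of_nonneg_of_le_pi (abs_nonneg (R₁ - r)) (by linarith [pi_pos]) hr
  have hlegs := arccos_div_cos_add_le hcosR.le (hcosR.trans_le hcos_le) hcos_le
    ((le_abs_self _).trans (hr.trans hR.le))
  linarith

/-- Spherical (c = 1) width estimate for rounded spindle-shaped hypersurfaces on the
unit sphere: for inscribed radius r ∈ [R₂, R₁] ⊆ [0, π/2), the width of the spherical
shell is at most 2·arccos √(cos(R₁ − R₂)) − (R₁ − R₂). -/
theorem spindle_width_spherical (R₁ R₂ r : ℝ)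
    (hR₂ : 0 ≤ R₂) (hr₂ : R₂ ≤ r) (hr₁ : r ≤ R₁) (hR₁ : R₁ < Real.pi / 2) :
    Real.arccos (Real.cos (R₁ - R₂) / Real.cos (R₁ - r)) + R₂ - r ≤
      2 * Real.arccos (Real.sqrt (Real.cos (R₁ - R₂))) - (R₁ - R₂) :=
  spindle_width_spherical_general (abs_le.2 ⟨by linarith, by linarith⟩) (by linarith)
end

section
/- For all real numbers R₁, R₂ with 0 ≤ R₂ ≤ R₁ < π/2, setting a = Real.arccos (Real.sqrt (Real.cos (R₁ − R₂))) and r = R₁ − a, we have R₂ ≤ r ≤ R₁ and Real.arccos (Real.cos (R₁ − R₂) / Real.cos (R₁ − r)) + R₂ − r = 2·a − (R₁ − R₂). In other words, the spherical width bound is attained (the estimate is sharp). -/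
/-!
Spherical Pythagoras, `cos h = cos x * cos y` for a right triangle with hypotenuse `h` and legs
`x`, `y`, governs the spindle: with inscribed radius `r` and circumscribed radius `R`, the segments
`R₁ - r` and `R - R₂` are the legs of a right triangle with hypotenuse `R₁ - R₂`. The width is
`R - r = (R₁ - r) + (R - R₂) - (R₁ - R₂)`, the sum of the legs minus the hypotenuse, and the value
in question is the one at the isosceles triangle, whose legs `a` satisfy
`cos a ^ 2 = cos (R₁ - R₂)`.
-/

open Real

/-- The second leg of a right triangle on the unit sphere with hypotenuse `h` and first leg `x`,
obtained by solving the spherical Pythagorean theorem; it is meaningful for `cos x ≠ 0` and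
`|cos h| ≤ |cos x|`. The spindle with inscribed radius `r` has circumscribed radius
`sphericalLeg (R₁ - R₂) (R₁ - r) + R₂`. -/
noncomputable def sphericalLeg (h x : ℝ) : ℝ :=
  arccos (cos h / cos x)

/-- The common length of the legs of an isosceles right triangle on the unit sphere with
hypotenuse `h`; it is meaningful for `0 ≤ cos h`. The spindle of inscribed radius
`R₁ - isoscelesSphericalLeg (R₁ - R₂)` attains the width bound. -/
noncomputable def isoscelesSphericalLeg (h : ℝ) : ℝ :=
  arccos √(cos h)

theorem sphericalLeg_eq_of_cos_eq_mul {h x y : ℝ} (hpyth : cos h = cos x * cos y)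
    (hx : cos x ≠ 0) (hy₀ : 0 ≤ y) (hyπ : y ≤ π) : sphericalLeg h x = y := by
  rw [sphericalLeg, hpyth, mul_div_cancel_left₀ _ hx, arccos_cos hy₀ hyπ]

theorem isoscelesSphericalLeg_nonneg (h : ℝ) : 0 ≤ isoscelesSphericalLeg h :=
  arccos_nonneg _

theorem cos_isoscelesSphericalLeg (h : ℝ) : cos (isoscelesSphericalLeg h) = √(cos h) :=
  cos_arccos (neg_one_lt_zero.le.trans (sqrt_nonneg _)) (sqrt_le_one.mpr (cos_le_one h))

theorem cos_isoscelesSphericalLeg_sq {h : ℝ} (hcos : 0 ≤ cos h) :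
    cos (isoscelesSphericalLeg h) ^ 2 = cos h := by
  rw [cos_isoscelesSphericalLeg, sq_sqrt hcos]

theorem isoscelesSphericalLeg_le_self {h : ℝ} (h₀ : 0 ≤ h) (hπ : h ≤ π / 2) :
    isoscelesSphericalLeg h ≤ h := by
  have hcos : 0 ≤ cos h := cos_nonneg_of_mem_Icc ⟨by linarith [pi_pos], hπ⟩
  have cos_le_sqrt : cos h ≤ √(cos h) :=
    le_sqrt_of_sq_le (pow_le_of_le_one hcos (cos_le_one h) two_ne_zero)
  calc
    arccos √(cos h) ≤ arccos (cos h) := arccos_le_arccos cos_le_sqrt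
    _ = h := arccos_cos h₀ (by linarith [pi_pos])

theorem sphericalLeg_isoscelesSphericalLeg {h : ℝ} (hcos : 0 < cos h) :
    sphericalLeg h (isoscelesSphericalLeg h) = isoscelesSphericalLeg h := by
  have hpyth := cos_isoscelesSphericalLeg_sq hcos.le
  have hleg : cos (isoscelesSphericalLeg h) ≠ 0 := by
    rw [cos_isoscelesSphericalLeg]
    exact (sqrt_pos.mpr hcos).ne'
  exact sphericalLeg_eq_of_cos_eq_mul (by rw [← sq, hpyth]) hleg
    (isoscelesSphericalLeg_nonneg h) (arccos_le_pi _)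

theorem spindle_width_spherical_sharp_general {R₁ R₂ : ℝ} (hle : R₂ ≤ R₁)
    (hlt : R₁ - R₂ < π / 2) :
    R₂ ≤ R₁ - isoscelesSphericalLeg (R₁ - R₂) ∧
    R₁ - isoscelesSphericalLeg (R₁ - R₂) ≤ R₁ ∧
    sphericalLeg (R₁ - R₂) (R₁ - (R₁ - isoscelesSphericalLeg (R₁ - R₂))) + R₂ -
      (R₁ - isoscelesSphericalLeg (R₁ - R₂)) =
    2 * isoscelesSphericalLeg (R₁ - R₂) - (R₁ - R₂) := by
  have hcos : 0 < cos (R₁ - R₂) := cos_pos_of_mem_Ioo ⟨by linarith [pi_pos], hlt⟩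
  refine ⟨?_, sub_le_self _ (isoscelesSphericalLeg_nonneg _), ?_⟩
  · exact le_sub_comm.mp (isoscelesSphericalLeg_le_self (sub_nonneg.mpr hle) hlt.le)
  · rw [sub_sub_cancel, sphericalLeg_isoscelesSphericalLeg hcos]
    ring

/-- Sharpness of the spherical width estimate: the bound 2a − (R₁ − R₂) where
a = arccos √(cos(R₁ − R₂)) is attained at r = R₁ − a. -/
theorem spindle_width_spherical_sharp (R₁ R₂ : ℝ)
    (hR₂ : 0 ≤ R₂) (hR₂₁ : R₂ ≤ R₁) (hR₁ : R₁ < Real.pi / 2) :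
    R₂ ≤ R₁ - Real.arccos (Real.sqrt (Real.cos (R₁ - R₂))) ∧
    R₁ - Real.arccos (Real.sqrt (Real.cos (R₁ - R₂))) ≤ R₁ ∧
    Real.arccos (Real.cos (R₁ - R₂) /
        Real.cos (R₁ - (R₁ - Real.arccos (Real.sqrt (Real.cos (R₁ - R₂)))))) + R₂ -
      (R₁ - Real.arccos (Real.sqrt (Real.cos (R₁ - R₂)))) =
    2 * Real.arccos (Real.sqrt (Real.cos (R₁ - R₂))) - (R₁ - R₂) :=
  spindle_width_spherical_sharp_general hR₂₁ (by linarith)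
end

section
/- Let R₁, R₂, r, V, a be real numbers with 0 ≤ R₂ ≤ r ≤ R₁, V ≥ 0, a ≥ 0, such that Real.cosh V · Real.cosh (R₁ − r) = Real.cosh (R₁ − R₂) and (Real.cosh a)² = Real.cosh (R₁ − R₂). Then V + R₂ − r ≤ 2·a − (R₁ − R₂). -/
/-! At the midpoint, log-convexity of `cosh` gives
`cosh ((V + (R₁ - r)) / 2) ^ 2 ≤ cosh V * cosh (R₁ - r) = cosh a ^ 2`, and `cosh` is increasing on
`[0, ∞)`, so `V + (R₁ - r) ≤ 2 * a`. -/

theorem cosh_add_mul_cosh_sub (x y : ℝ) :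
    Real.cosh (x + y) * Real.cosh (x - y) = Real.cosh x ^ 2 + Real.sinh y ^ 2 := by
  rw [Real.cosh_add, Real.cosh_sub]
  linear_combination Real.cosh x ^ 2 * Real.cosh_sq y - Real.sinh y ^ 2 * Real.sinh_sq x

theorem cosh_add_div_two_sq_le_cosh_mul_cosh (x y : ℝ) :
    Real.cosh ((x + y) / 2) ^ 2 ≤ Real.cosh x * Real.cosh y :=
  calc Real.cosh ((x + y) / 2) ^ 2
      ≤ Real.cosh ((x + y) / 2) ^ 2 + Real.sinh ((x - y) / 2) ^ 2 :=
        le_add_of_nonneg_right (sq_nonneg _)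
    _ = Real.cosh ((x + y) / 2 + (x - y) / 2) * Real.cosh ((x + y) / 2 - (x - y) / 2) :=
        (cosh_add_mul_cosh_sub _ _).symm
    _ = Real.cosh x * Real.cosh y := by ring_nf

theorem abs_add_le_two_mul_abs_of_cosh_mul_cosh_le_cosh_sq {x y a : ℝ}
    (h : Real.cosh x * Real.cosh y ≤ Real.cosh a ^ 2) : |x + y| ≤ 2 * |a| := by
  have cosh_sq_le : Real.cosh ((x + y) / 2) ^ 2 ≤ Real.cosh a ^ 2 :=
    (cosh_add_div_two_sq_le_cosh_mul_cosh x y).trans h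
  have abs_half_le : |(x + y) / 2| ≤ |a| :=
    Real.cosh_le_cosh.mp (le_of_sq_le_sq cosh_sq_le (Real.cosh_pos a).le)
  rwa [abs_div, abs_two, div_le_iff₀' two_pos] at abs_half_le

/-- Hyperbolic (c = −1) width estimate for rounded spindle-shaped hypersurfaces,
stated implicitly via cosh: if cosh V · cosh(R₁ − r) = cosh(R₁ − R₂) and
cosh² a = cosh(R₁ − R₂) with V, a ≥ 0, then the width V + R₂ − r is at most
2a − (R₁ − R₂). -/
theorem spindle_width_hyperbolic (R₁ R₂ r V a : ℝ)
    (hR₂ : 0 ≤ R₂) (hr₂ : R₂ ≤ r) (hr₁ : r ≤ R₁)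
    (hV : 0 ≤ V) (ha : 0 ≤ a)
    (hVdef : Real.cosh V * Real.cosh (R₁ - r) = Real.cosh (R₁ - R₂))
    (hadef : (Real.cosh a) ^ 2 = Real.cosh (R₁ - R₂)) :
    V + R₂ - r ≤ 2 * a - (R₁ - R₂) := by
  have width_bound : |V + (R₁ - r)| ≤ 2 * |a| :=
    abs_add_le_two_mul_abs_of_cosh_mul_cosh_le_cosh_sq (hVdef.trans hadef.symm).le
  rw [abs_of_nonneg ha] at width_bound
  linarith [le_abs_self (V + (R₁ - r))]
end
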